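/- Let G be the hosohedral-type group associated to pairs (m_1,ℓ_1),…,(m_h,ℓ_h). For each j ∈ {1,…,h}, the natural group homomorphism φ_j : G(m_j,ℓ_j) → G sending the generator a_i of G(m_j,ℓ_j) to a_{j,i} is injective. -/

import Mathlib

/-- The word `a_{j,i} a_{j,i+1} ⋯ a_{j,i+p-1}` (second indices mod `m j`) in the free group
on the disjoint union of the `ZMod (m j)`. -/
def hosoWord (h : ℕ) (m : Fin h → ℕ) (j : Fin h) (i : ZMod (m j)) (p : ℕ) :
    FreeGroup (Σ j : Fin h, ZMod (m j)) :=
  ((List.range p).map (fun k => FreeGroup.of ⟨j, i + (k : ZMod (m j))⟩)).prod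

/-- The defining relations of the hosohedral-type group associated to the pairs
`(m j, ℓ j)`: the circular relations `s_j(i, ℓ j) = s_j(i+1, ℓ j)` within each factor,
together with the identifications `s_j(0, ℓ j) = s_j'(0, ℓ j')` of the Garside elements. -/
def hosoRels (h : ℕ) (m ℓ : Fin h → ℕ) : Set (FreeGroup (Σ j : Fin h, ZMod (m j))) :=
  { r | (∃ (j : Fin h) (i : ZMod (m j)),
          r = hosoWord h m j i (ℓ j) * (hosoWord h m j (i + 1) (ℓ j))⁻¹) ∨
        (∃ j j' : Fin h, r = hosoWord h m j 0 (ℓ j) * (hosoWord h m j' 0 (ℓ j'))⁻¹) }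

/-- The hosohedral-type group associated to the pairs `(m j, ℓ j)`. -/
abbrev HosoGroup (h : ℕ) (m ℓ : Fin h → ℕ) := PresentedGroup (hosoRels h m ℓ)

/-- The generator `a_{j,i}` of the hosohedral-type group. -/
def hosoGen (h : ℕ) (m ℓ : Fin h → ℕ) (j : Fin h) (i : ZMod (m j)) : HosoGroup h m ℓ :=
  PresentedGroup.of ⟨j, i⟩

/-- The element `s_j(i,p) = a_{j,i} a_{j,i+1} ⋯ a_{j,i+p-1}` of the hosohedral-type group. -/
def hosoS (h : ℕ) (m ℓ : Fin h → ℕ) (j : Fin h) (i : ZMod (m j)) (p : ℕ) :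
    HosoGroup h m ℓ :=
  ((List.range p).map (fun k => hosoGen h m ℓ j (i + (k : ZMod (m j))))).prod

/-- The Garside element `Δ` of the hosohedral-type group, as the image of `s_j(0, ℓ j)`
(this is independent of `j` by the defining relations). -/
def hosoDelta (h : ℕ) (m ℓ : Fin h → ℕ) (j : Fin h) : HosoGroup h m ℓ :=
  hosoS h m ℓ j 0 (ℓ j)

/-- The `j`-th factor subgroup of the hosohedral-type group, generated by the
generators `a_{j,0}, …, a_{j, m_j - 1}`. -/
def hosoFactor (h : ℕ) (m ℓ : Fin h → ℕ) (j : Fin h) : Subgroup (HosoGroup h m ℓ) :=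
  Subgroup.closure (Set.range (hosoGen h m ℓ j))

/-- The word `a_i a_{i+1} ⋯ a_{i+p-1}` (indices mod `m`) in the free group on `ZMod m`. -/
def circWord (m : ℕ) (i : ZMod m) (p : ℕ) : FreeGroup (ZMod m) :=
  ((List.range p).map (fun k => FreeGroup.of (i + (k : ZMod m)))).prod

/-- The defining relations of the circular group `G(m,ℓ)`. -/
def circRels (m ℓ : ℕ) : Set (FreeGroup (ZMod m)) :=
  { r | ∃ i : ZMod m, r = circWord m i ℓ * (circWord m (i + 1) ℓ)⁻¹ }

/-- The circular group `G(m,ℓ)`. -/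
abbrev CircularGroup (m ℓ : ℕ) := PresentedGroup (circRels m ℓ)

/-- The generator `a_i` of the circular group `G(m,ℓ)`. -/
def circGen (m ℓ : ℕ) (i : ZMod m) : CircularGroup m ℓ :=
  PresentedGroup.of i

/-- The element `s(i,p) = a_i a_{i+1} ⋯ a_{i+p-1}` of the circular group `G(m,ℓ)`. -/
def circS (m ℓ : ℕ) (i : ZMod m) (p : ℕ) : CircularGroup m ℓ :=
  ((List.range p).map (fun k => circGen m ℓ (i + (k : ZMod m)))).prod

/-- The Garside element `Δ = s(0,ℓ)` of the circular group `G(m,ℓ)`. -/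
def circDelta (m ℓ : ℕ) : CircularGroup m ℓ := circS m ℓ 0 ℓ

open Monoid

/-- The homomorphism `G(m,ℓ) → ℤ` sending every generator to `1`. -/
def circLength (m ℓ : ℕ) : CircularGroup m ℓ →* Multiplicative ℤ :=
  PresentedGroup.toGroup (f := fun _ => Multiplicative.ofAdd 1) (by
    rintro _ ⟨i, rfl⟩
    simp [circWord, map_list_prod, Function.comp_def])

lemma circLength_circDelta (m ℓ : ℕ) :
    circLength m ℓ (circDelta m ℓ) = Multiplicative.ofAdd (ℓ : ℤ) := by
  simp [circDelta, circS, circGen, circLength, map_list_prod, Function.comp_def, ← ofAdd_nsmul]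

lemma zpowersHom_circDelta_injective (m : ℕ) {ℓ : ℕ} (hℓ : 0 < ℓ) :
    Function.Injective (zpowersHom (CircularGroup m ℓ) (circDelta m ℓ)) := by
  rw [injective_iff_map_eq_one]
  intro n hn
  have hlen := congrArg (circLength m ℓ) hn
  rw [zpowersHom_apply, map_zpow, circLength_circDelta, map_one, ← ofAdd_zsmul,
    ofAdd_eq_one, smul_eq_mul, mul_eq_zero] at hlen
  exact toAdd_eq_zero.mp (hlen.resolve_right (by exact_mod_cast hℓ.ne'))

lemma mk_circWord (m ℓ : ℕ) (i : ZMod m) (p : ℕ) :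
    PresentedGroup.mk (circRels m ℓ) (circWord m i p) = circS m ℓ i p := by
  simp [circWord, circS, circGen, PresentedGroup.of, map_list_prod, Function.comp_def]

lemma circS_succ (m ℓ : ℕ) (i : ZMod m) : circS m ℓ i ℓ = circS m ℓ (i + 1) ℓ := by
  rw [← mk_circWord, ← mk_circWord, ← mul_inv_eq_one, ← map_inv, ← map_mul]
  exact PresentedGroup.one_of_mem ⟨i, rfl⟩

/-- The amalgamated product of the circular groups `G(m j, ℓ j)` along the infinite cyclic
subgroups generated by their Garside elements. -/
abbrev CircAmalgam {h : ℕ} (m ℓ : Fin h → ℕ) :=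
  PushoutI (fun j => zpowersHom (CircularGroup (m j) (ℓ j)) (circDelta (m j) (ℓ j)))

lemma lift_hosoWord {h : ℕ} (m ℓ : Fin h → ℕ) (j : Fin h) (i : ZMod (m j)) (p : ℕ) :
    FreeGroup.lift (fun x : Σ j, ZMod (m j) =>
      (PushoutI.of x.1 (circGen (m x.1) (ℓ x.1) x.2) : CircAmalgam m ℓ)) (hosoWord h m j i p) =
    PushoutI.of j (circS (m j) (ℓ j) i p) := by
  simp [hosoWord, circS, map_list_prod, Function.comp_def, ← List.map_eq_flatMap]

lemma of_circDelta {h : ℕ} (m ℓ : Fin h → ℕ) (j : Fin h) :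
    (PushoutI.of j (circDelta (m j) (ℓ j)) : CircAmalgam m ℓ) =
      PushoutI.base _ (Multiplicative.ofAdd 1) := by
  rw [← PushoutI.of_apply_eq_base _ j]
  simp

/-- The natural homomorphism from the hosohedral-type group to the amalgamated product. -/
def hosoToAmalgam {h : ℕ} (m ℓ : Fin h → ℕ) : HosoGroup h m ℓ →* CircAmalgam m ℓ :=
  PresentedGroup.toGroup
    (f := fun x => PushoutI.of x.1 (circGen (m x.1) (ℓ x.1) x.2)) (by
    rintro _ (⟨j, i, rfl⟩ | ⟨j, j', rfl⟩)
    · rw [map_mul, map_inv, mul_inv_eq_one, lift_hosoWord, lift_hosoWord, circS_succ]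
    · rw [map_mul, map_inv, mul_inv_eq_one, lift_hosoWord, lift_hosoWord]
      exact (of_circDelta m ℓ j).trans (of_circDelta m ℓ j').symm)

/-- The natural homomorphism `φ_j : G(m_j, ℓ_j) → G` from a circular factor into the
hosohedral-type group, sending the generator `a_i` to `a_{j,i}`, is injective. -/
theorem factor_embedding_injective (h : ℕ) (m ℓ : Fin h → ℕ)
    (hm : ∀ j, 0 < m j) (hℓ : ∀ j, 0 < ℓ j) (hne : ∀ j, (m j, ℓ j) ≠ (1, 1))
    (j : Fin h) (φ : CircularGroup (m j) (ℓ j) →* HosoGroup h m ℓ)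
    (hφ : ∀ i : ZMod (m j), φ (circGen (m j) (ℓ j) i) = hosoGen h m ℓ j i) :
    Function.Injective φ := by
  have hcomp : (hosoToAmalgam m ℓ).comp φ =
      PushoutI.of (G := fun j => CircularGroup (m j) (ℓ j)) j := by
    refine PresentedGroup.ext fun i => ?_
    change hosoToAmalgam m ℓ (φ (circGen (m j) (ℓ j) i)) = _
    rw [hφ]
    exact PresentedGroup.toGroup.of _
  have hinj := PushoutI.of_injective
    (fun j => zpowersHom_circDelta_injective (m j) (hℓ j)) j
  rw [← hcomp, MonoidHom.coe_comp] at hinj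
  exact hinj.of_comp
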